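/- Bound on expected privacy loss under pure DP: if μ and ν are probability measures on Y with mutually bounded densities satisfying e^{−ε} ≤ (dμ/dν)(y) ≤ e^{ε} for all y, then ∫ log(dμ/dν) dμ ≤ ε²/2 — i.e., the KL divergence KL(μ‖ν) ≤ ε²/2. -/

import Mathlib

open MeasureTheory Real

/-!
Under `μ`, the privacy loss `X = log (dμ/dν)` is a bounded random variable, and it satisfies
`∫ exp (-X) dμ = ∫ (dν/dμ) dμ = ν(Y)`: its cumulant generating function at `-1` is known exactly.
Hoeffding's lemma at `-1` bounds that value by `-∫ X dμ` plus an eighth of the squared width of the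
range of `X`, and rearranging bounds the mean of `X`, which is the divergence.
-/

section Hoeffding

open ProbabilityTheory

variable {Ω : Type*} [MeasurableSpace Ω] {μ : Measure Ω} {X : Ω → ℝ}

theorem cgf_sub_const [NeZero μ] {t : ℝ} (hX : Integrable (fun ω ↦ exp (t * X ω)) μ) (c : ℝ) :
    cgf (fun ω ↦ X ω - c) μ t = cgf X μ t - t * c := by
  simp only [cgf, sub_eq_add_neg, mgf_add_const]
  rw [log_mul (mgf_pos' (NeZero.ne μ) hX).ne' (exp_ne_zero _), log_exp, mul_neg]

theorem cgf_le_of_mem_Icc [IsProbabilityMeasure μ] {a b : ℝ} (hX : AEMeasurable X μ)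
    (hab : ∀ᵐ ω ∂μ, X ω ∈ Set.Icc a b) (t : ℝ) :
    cgf X μ t ≤ t * μ[X] + (b - a) ^ 2 * t ^ 2 / 8 := by
  have hoeffding := (hasSubgaussianMGF_of_mem_Icc hX hab).cgf_le t
  have parameter_eq : (((‖b - a‖₊ / 2) ^ 2 : NNReal) : ℝ) = (b - a) ^ 2 / 4 := by
    push_cast
    rw [div_pow, norm_eq_abs, sq_abs]
    norm_num
  rw [cgf_sub_const (integrable_exp_mul_of_mem_Icc hX hab), parameter_eq] at hoeffding
  linarith

end Hoeffding

section LogLikelihoodRatio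

variable {Y : Type*} [MeasurableSpace Y] {μ ν : Measure Y}

theorem absolutelyContinuous_of_rnDeriv_ne_zero (h : ∀ᵐ y ∂ν, μ.rnDeriv ν y ≠ 0) : ν ≪ μ :=
  (withDensity_absolutelyContinuous' (Measure.measurable_rnDeriv μ ν).aemeasurable h).trans
    (Measure.absolutelyContinuous_of_le (Measure.withDensity_rnDeriv_le μ ν))

theorem mgf_llr_neg_one [SigmaFinite μ] [SigmaFinite ν] (hμν : μ ≪ ν) (hνμ : ν ≪ μ) :
    ProbabilityTheory.mgf (llr μ ν) μ (-1) = ν.real Set.univ :=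
  calc ∫ y, exp (-1 * llr μ ν y) ∂μ
      = ∫ y, (ν.rnDeriv μ y).toReal ∂μ :=
        integral_congr_ae (by simpa only [neg_one_mul] using exp_neg_llr hμν)
    _ = ν.real Set.univ := Measure.integral_toReal_rnDeriv hνμ

theorem integral_llr_le_of_mem_Icc [IsProbabilityMeasure μ] [SigmaFinite ν] (hμν : μ ≪ ν)
    (hνμ : ν ≪ μ) {a b : ℝ} (hab : ∀ᵐ y ∂μ, llr μ ν y ∈ Set.Icc a b) :
    ∫ y, llr μ ν y ∂μ ≤ (b - a) ^ 2 / 8 - log (ν.real Set.univ) := by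
  have hoeffding := cgf_le_of_mem_Icc (measurable_llr μ ν).aemeasurable hab (-1)
  rw [ProbabilityTheory.cgf, mgf_llr_neg_one hμν hνμ] at hoeffding
  linarith

theorem kl_le_of_bounded_rnDeriv_general [IsProbabilityMeasure μ] [SigmaFinite ν] (hμν : μ ≪ ν)
    {a b : ℝ} (hab : ∀ᵐ y ∂ν, exp a ≤ (μ.rnDeriv ν y).toReal ∧ (μ.rnDeriv ν y).toReal ≤ exp b) :
    ∫ y, log ((μ.rnDeriv ν y).toReal) ∂μ ≤ (b - a) ^ 2 / 8 - log (ν.real Set.univ) := by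
  have rnDeriv_pos : ∀ᵐ y ∂ν, 0 < (μ.rnDeriv ν y).toReal :=
    hab.mono fun y hy ↦ (exp_pos a).trans_le hy.1
  have hνμ : ν ≪ μ := absolutelyContinuous_of_rnDeriv_ne_zero <|
    rnDeriv_pos.mono fun y hy ↦ (ENNReal.toReal_pos_iff.1 hy).1.ne'
  have llr_mem : ∀ᵐ y ∂ν, llr μ ν y ∈ Set.Icc a b := by
    filter_upwards [hab, rnDeriv_pos] with y ⟨ha, hb⟩ hpos
    exact ⟨(le_log_iff_exp_le hpos).2 ha, (log_le_iff_le_exp hpos).2 hb⟩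
  exact integral_llr_le_of_mem_Icc hμν hνμ (hμν.ae_le llr_mem)

end LogLikelihoodRatio

/-- Bound on expected privacy loss under pure DP: if `μ, ν` are probability measures with
`μ ≪ ν`, `ν ≪ μ`, and `e^{-ε} ≤ dμ/dν ≤ e^ε` (`ν`-a.e.), then
`KL(μ‖ν) = ∫ log (dμ/dν) dμ ≤ ε² / 2`. -/
theorem kl_le_of_bounded_rnDeriv {Y : Type*} [MeasurableSpace Y] (μ ν : Measure Y)
    [IsProbabilityMeasure μ] [IsProbabilityMeasure ν]
    (hμν : μ ≪ ν) (hνμ : ν ≪ μ) (ε : ℝ) (hε : 0 ≤ ε)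
    (hbound : ∀ᵐ y ∂ν, Real.exp (-ε) ≤ (μ.rnDeriv ν y).toReal ∧
      (μ.rnDeriv ν y).toReal ≤ Real.exp ε) :
    ∫ y, Real.log ((μ.rnDeriv ν y).toReal) ∂μ ≤ ε ^ 2 / 2 := by
  refine (kl_le_of_bounded_rnDeriv_general hμν hbound).trans_eq ?_
  rw [probReal_univ, log_one]
  ring
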